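/- arXiv:2501.14545 — 2 statements merged into one kernel-verified Lean document; each statement's English description precedes it below -/
import Mathlib

section
/- Let b > 0 and let y be a real number with |y| < b. Then the Fourier transform of the function h_{y,b}(t) := cosh(2πyt)/cosh(2πbt), namely ĥ_{y,b}(x) := ∫_{−∞}^{∞} e^{−2πi x t} (cosh(2πyt)/cosh(2πbt)) dt, equals (1/b) · (cos(πy/(2b)) cosh(πx/(2b))) / (cos(πy/b) + cosh(πx/b)) for every real x, and this value is strictly positive. -/
open Filter Topology MeasureTheory Set

/-!
The logistic substitution `r = σ(s) = e^{s/2} / (2 cosh (s/2))` turns Euler's Beta integral into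
`B(u, v) = ∫ e^{(u - v) s/2} / (2 cosh (s/2)) ^ (u + v) ds`. On the line `u + v = 1` the reflection
formula evaluates it, which gives the two-sided Laplace transform `∫ e^{ws} / cosh s ds =
π / cos (πw/2)` for `|Re w| < 1`. Expanding `cosh (vs)` into exponentials adds two such values, at
`w + v` and `w - v`; the Fourier transform is the case `s = 2πbt`,
`w = -ix/b`, `v = y/b`.
-/

lemma sigmoid_eq_exp_half_div_cosh_half (s : ℝ) :
    Real.sigmoid s = Real.exp (s / 2) / (2 * Real.cosh (s / 2)) := by
  have hs : Real.exp (-s) = Real.exp (-(s / 2)) * Real.exp (-(s / 2)) := by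
    rw [← Real.exp_add]; ring_nf
  rw [Real.sigmoid_def, hs, Real.cosh_eq, Real.exp_neg]
  field_simp

lemma ofReal_exp_div_cpow (a : ℝ) {c : ℝ} (hc : 0 < c) (u : ℂ) :
    ((Real.exp a / c : ℝ) : ℂ) ^ u = Complex.exp (a * u) / (c : ℂ) ^ u := by
  rw [Complex.cpow_def_of_ne_zero (by exact_mod_cast (div_pos (Real.exp_pos a) hc).ne'),
    Complex.cpow_def_of_ne_zero (by exact_mod_cast hc.ne'),
    ← Complex.ofReal_log (div_pos (Real.exp_pos a) hc).le, ← Complex.ofReal_log hc.le,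
    Real.log_div (Real.exp_pos a).ne' hc.ne', Real.log_exp, ← Complex.exp_sub]
  push_cast
  ring_nf

lemma sigmoid_cpow_mul_sigmoid_neg_cpow (u v : ℂ) (s : ℝ) :
    (Real.sigmoid s : ℂ) ^ u * (Real.sigmoid (-s) : ℂ) ^ v =
      Complex.exp ((u - v) * (s / 2 : ℝ)) / (2 * Complex.cosh (s / 2 : ℝ)) ^ (u + v) := by
  have hc : 0 < 2 * Real.cosh (s / 2) := mul_pos two_pos (Real.cosh_pos _)
  have hc' : (2 * Complex.cosh (s / 2 : ℝ) : ℂ) = (2 * Real.cosh (s / 2) : ℝ) := by push_cast; rfl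
  rw [sigmoid_eq_exp_half_div_cosh_half s, sigmoid_eq_exp_half_div_cosh_half (-s), neg_div,
    Real.cosh_neg, ofReal_exp_div_cpow _ hc, ofReal_exp_div_cpow _ hc, hc',
    Complex.cpow_add _ _ (by exact_mod_cast hc.ne'), div_mul_div_comm, ← Complex.exp_add]
  push_cast
  ring_nf

lemma abs_deriv_sigmoid_smul_beta_integrand (u v : ℂ) (s : ℝ) :
    |Real.sigmoid s * (1 - Real.sigmoid s)| •
        ((Real.sigmoid s : ℂ) ^ (u - 1) * (1 - (Real.sigmoid s : ℂ)) ^ (v - 1)) =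
      Complex.exp ((u - v) * (s / 2 : ℝ)) / (2 * Complex.cosh (s / 2 : ℝ)) ^ (u + v) := by
  have hσ := Real.sigmoid_pos s
  have hσ' := Real.sigmoid_pos (-s)
  have h_one_sub : (1 - Real.sigmoid s : ℂ) = Real.sigmoid (-s) := by
    rw [Real.sigmoid_neg]; push_cast; rfl
  have hne : (Real.sigmoid s : ℂ) ≠ 0 := by exact_mod_cast hσ.ne'
  have hne' : (Real.sigmoid (-s) : ℂ) ≠ 0 := by exact_mod_cast hσ'.ne'
  rw [← sigmoid_cpow_mul_sigmoid_neg_cpow, h_one_sub, ← Real.sigmoid_neg,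
    abs_of_pos (mul_pos hσ hσ'), Complex.real_smul, Complex.cpow_sub _ _ hne,
    Complex.cpow_sub _ _ hne', Complex.cpow_one, Complex.cpow_one]
  push_cast
  field_simp

lemma integrable_exp_div_two_mul_cosh_cpow {u v : ℂ} (hu : 0 < u.re) (hv : 0 < v.re) :
    Integrable fun s : ℝ ↦
      Complex.exp ((u - v) * s) / (2 * Complex.cosh s) ^ (u + v) := by
  have h_beta := Complex.betaIntegral_convergent hu hv
  rw [intervalIntegrable_iff_integrableOn_Ioo_of_le zero_le_one, ← Real.range_sigmoid,
    ← image_univ, integrableOn_image_iff_integrableOn_abs_deriv_smul MeasurableSet.univ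
      (fun s _ ↦ (Real.hasDerivAt_sigmoid s).hasDerivWithinAt) Real.sigmoid_injective.injOn,
    integrableOn_univ] at h_beta
  simp only [abs_deriv_sigmoid_smul_beta_integrand] at h_beta
  simpa using h_beta.comp_mul_left' (two_ne_zero (α := ℝ))

lemma integral_exp_div_two_mul_cosh_cpow (u v : ℂ) :
    ∫ s : ℝ, Complex.exp ((u - v) * s) / (2 * Complex.cosh s) ^ (u + v) =
      Complex.betaIntegral u v / 2 := by
  let f : ℝ → ℂ := fun s ↦ Complex.exp ((u - v) * s) / (2 * Complex.cosh s) ^ (u + v)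
  have h_beta : Complex.betaIntegral u v = ∫ s : ℝ, f (s / 2) := by
    rw [Complex.betaIntegral, intervalIntegral.integral_of_le zero_le_one,
      integral_Ioc_eq_integral_Ioo, ← Real.range_sigmoid, ← image_univ,
      integral_image_eq_integral_abs_deriv_smul MeasurableSet.univ
        (fun s _ ↦ (Real.hasDerivAt_sigmoid s).hasDerivWithinAt) Real.sigmoid_injective.injOn,
      setIntegral_univ]
    simp only [abs_deriv_sigmoid_smul_beta_integrand, f]
  rw [h_beta, Measure.integral_comp_div, abs_two, Complex.real_smul]
  simp [f]

lemma betaIntegral_one_sub {u : ℂ} (hu₀ : 0 < u.re) (hu₁ : u.re < 1) :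
    Complex.betaIntegral u (1 - u) = Real.pi / Complex.sin (Real.pi * u) := by
  have h := Complex.Gamma_mul_Gamma_eq_betaIntegral hu₀ (t := 1 - u) (by simpa using hu₁)
  rwa [add_sub_cancel, Complex.Gamma_one, one_mul, Complex.Gamma_mul_Gamma_one_sub, eq_comm] at h

section Sech

variable {v w : ℂ}

lemma integrable_exp_mul_div_cosh (hw : |w.re| < 1) :
    Integrable fun s : ℝ ↦ Complex.exp (w * s) / Complex.cosh s := by
  obtain ⟨hw₁, hw₂⟩ := abs_lt.mp hw
  have h := integrable_exp_div_two_mul_cosh_cpow (u := (1 + w) / 2) (v := (1 - w) / 2)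
    (by simp; linarith) (by simp; linarith)
  rw [show (1 + w) / 2 - (1 - w) / 2 = w by ring,
    show (1 + w) / 2 + (1 - w) / 2 = 1 by ring] at h
  refine (h.const_mul 2).congr (.of_forall fun s ↦ ?_)
  simp only [Complex.cpow_one]
  ring

lemma integral_exp_mul_div_cosh (hw : |w.re| < 1) :
    ∫ s : ℝ, Complex.exp (w * s) / Complex.cosh s = Real.pi / Complex.cos (Real.pi * w / 2) := by
  obtain ⟨hw₁, hw₂⟩ := abs_lt.mp hw
  have h_sub : (1 + w) / 2 - (1 - w) / 2 = w := by ring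
  have h_add : (1 + w) / 2 + (1 - w) / 2 = 1 := by ring
  calc ∫ s : ℝ, Complex.exp (w * s) / Complex.cosh s
      = ∫ s : ℝ, 2 * (Complex.exp (w * s) / (2 * Complex.cosh s)) := by
        congr with s
        ring
    _ = Complex.betaIntegral ((1 + w) / 2) ((1 - w) / 2) := by
        have h := integral_exp_div_two_mul_cosh_cpow ((1 + w) / 2) ((1 - w) / 2)
        simp only [h_sub, h_add, Complex.cpow_one] at h
        rw [integral_const_mul, h, mul_div_cancel₀ _ two_ne_zero]
    _ = Real.pi / Complex.sin (Real.pi * w / 2 + Real.pi / 2) := by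
        rw [show (1 - w) / 2 = 1 - (1 + w) / 2 by ring,
          betaIntegral_one_sub (by simp; linarith) (by simp; linarith)]
        ring_nf
    _ = Real.pi / Complex.cos (Real.pi * w / 2) := by rw [Complex.sin_add_pi_div_two]

lemma cos_pi_mul_div_two_ne_zero (hw : |w.re| < 1) : Complex.cos (Real.pi * w / 2) ≠ 0 := by
  obtain ⟨hw₁, hw₂⟩ := abs_lt.mp hw
  have hre : (Real.pi * w / 2).re = Real.pi * w.re / 2 := by simp
  have h_lt : (Real.pi * w / 2).re < Real.pi / 2 := by
    rw [hre]; nlinarith [Real.pi_pos]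
  refine Complex.cos_ne_zero_of_arctan_bounds (fun h ↦ ?_) ?_ h_lt.le
  · simp [h] at h_lt
  · rw [hre]; nlinarith [Real.pi_pos]

lemma inv_cos_half_add_add_inv_cos_half_sub {a b : ℂ} (h_add : Complex.cos ((a + b) / 2) ≠ 0)
    (h_sub : Complex.cos ((a - b) / 2) ≠ 0) :
    (Complex.cos ((a + b) / 2))⁻¹ + (Complex.cos ((a - b) / 2))⁻¹ =
      4 * (Complex.cos (a / 2) * Complex.cos (b / 2)) / (Complex.cos a + Complex.cos b) := by
  rw [Complex.cos_add_cos, inv_add_inv h_add h_sub, Complex.cos_add_cos,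
    show ((a + b) / 2 + (a - b) / 2) / 2 = a / 2 by ring,
    show ((a + b) / 2 - (a - b) / 2) / 2 = b / 2 by ring]
  field_simp
  ring

lemma integral_exp_mul_cosh_div_cosh (h : |v.re| + |w.re| < 1) :
    ∫ s : ℝ, Complex.exp (w * s) * (Complex.cosh (v * s) / Complex.cosh s) =
      2 * Real.pi * (Complex.cos (Real.pi * v / 2) * Complex.cos (Real.pi * w / 2)) /
        (Complex.cos (Real.pi * v) + Complex.cos (Real.pi * w)) := by
  have h_add : |(w + v).re| < 1 := (abs_add_le _ _).trans_lt (by rwa [add_comm])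
  have h_sub : |(w - v).re| < 1 := (abs_sub _ _).trans_lt (by rwa [add_comm])
  have h_split (s : ℝ) : Complex.exp (w * s) * (Complex.cosh (v * s) / Complex.cosh s) =
      1 / 2 * (Complex.exp ((w + v) * s) / Complex.cosh s +
        Complex.exp ((w - v) * s) / Complex.cosh s) := by
    rw [Complex.cosh, add_mul, sub_eq_neg_add w v, add_mul, neg_mul, Complex.exp_add,
      Complex.exp_add]
    ring
  have h_cos := inv_cos_half_add_add_inv_cos_half_sub (a := Real.pi * w) (b := Real.pi * v)
    (by rw [← mul_add]; exact cos_pi_mul_div_two_ne_zero h_add)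
    (by rw [← mul_sub]; exact cos_pi_mul_div_two_ne_zero h_sub)
  rw [← mul_add, ← mul_sub] at h_cos
  simp_rw [h_split]
  rw [integral_const_mul, integral_add (integrable_exp_mul_div_cosh h_add)
    (integrable_exp_mul_div_cosh h_sub), integral_exp_mul_div_cosh h_add,
    integral_exp_mul_div_cosh h_sub]
  linear_combination (Real.pi / 2 : ℂ) * h_cos

end Sech

theorem fourier_cosh_ratio_general (b : ℝ) (x y : ℂ) (h : |y.re| + |x.im| < b) :
    ∫ t : ℝ, Complex.exp (-(2 * Real.pi * Complex.I * x * t)) *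
        (Complex.cosh (2 * Real.pi * y * t) / Complex.cosh (2 * Real.pi * b * t)) =
      1 / b * (Complex.cos (Real.pi * y / (2 * b)) * Complex.cosh (Real.pi * x / (2 * b))) /
        (Complex.cos (Real.pi * y / b) + Complex.cosh (Real.pi * x / b)) := by
  have hb : 0 < b := (add_nonneg (abs_nonneg _) (abs_nonneg _)).trans_lt h
  have hbC : (b : ℂ) ≠ 0 := by exact_mod_cast hb.ne'
  have hπ : (Real.pi : ℂ) ≠ 0 := by exact_mod_cast Real.pi_ne_zero
  have h_strip : |(y / b).re| + |(-(x / b) * Complex.I).re| < 1 := by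
    simp [abs_div, abs_of_pos hb, ← add_div, div_lt_one hb, h]
  let f : ℝ → ℂ := fun s ↦
    Complex.exp (-(x / b) * Complex.I * s) * (Complex.cosh (y / b * s) / Complex.cosh s)
  have h_scale (t : ℝ) : Complex.exp (-(2 * Real.pi * Complex.I * x * t)) *
      (Complex.cosh (2 * Real.pi * y * t) / Complex.cosh (2 * Real.pi * b * t)) =
        f (2 * Real.pi * b * t) := by
    simp only [f]
    push_cast
    congr! 2 <;> field_simp
  have h_cos_half : Complex.cos (Real.pi * (-(x / b) * Complex.I) / 2) =
      Complex.cosh (Real.pi * x / (2 * b)) := by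
    rw [← Complex.cos_mul_I, ← Complex.cos_neg]; ring_nf
  have h_cos : Complex.cos (Real.pi * (-(x / b) * Complex.I)) =
      Complex.cosh (Real.pi * x / b) := by
    rw [← Complex.cos_mul_I, ← Complex.cos_neg]; ring_nf
  simp_rw [h_scale]
  rw [Measure.integral_comp_mul_left, integral_exp_mul_cosh_div_cosh h_strip, h_cos_half, h_cos,
    abs_of_pos (by positivity), Complex.real_smul,
    show Real.pi * (y / b) / 2 = Real.pi * y / (2 * b) by ring, mul_div_assoc']
  push_cast
  field_simp

theorem fourier_cosh_ratio_pos {b y : ℝ} (hy : |y| < b) (x : ℝ) :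
    0 < (1 / b) * (Real.cos (Real.pi * y / (2 * b)) * Real.cosh (Real.pi * x / (2 * b))) /
          (Real.cos (Real.pi * y / b) + Real.cosh (Real.pi * x / b)) := by
  have hb : 0 < b := (abs_nonneg y).trans_lt hy
  obtain ⟨hy₁, hy₂⟩ := abs_lt.mp hy
  have hπ := Real.pi_pos
  have h_half : 0 < Real.cos (Real.pi * y / (2 * b)) := by
    refine Real.cos_pos_of_mem_Ioo ⟨?_, ?_⟩
    · rw [lt_div_iff₀ (by positivity)]; nlinarith
    · rw [div_lt_iff₀ (by positivity)]; nlinarith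
  have h_double : Real.cos (Real.pi * y / b) = 2 * Real.cos (Real.pi * y / (2 * b)) ^ 2 - 1 := by
    rw [← Real.cos_two_mul]; field_simp
  have h_denom : 0 < Real.cos (Real.pi * y / b) + Real.cosh (Real.pi * x / b) := by
    rw [h_double]; nlinarith [Real.one_le_cosh (Real.pi * x / b)]
  positivity

/-- For `|y| < b`, the Fourier transform of `h_{y,b}(t) = cosh(2πyt)/cosh(2πbt)` is
`(1/b) (cos(πy/(2b)) cosh(πx/(2b))) / (cos(πy/b) + cosh(πx/b))`, which is positive. -/
theorem fourier_cosh_ratio (b y : ℝ) (hb : 0 < b) (hy : |y| < b) (x : ℝ) :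
    (∫ t : ℝ, Complex.exp (-(2 * Real.pi * Complex.I * x * t)) *
        ((Real.cosh (2 * Real.pi * y * t) / Real.cosh (2 * Real.pi * b * t) : ℝ) : ℂ))
      = (((1 / b) * (Real.cos (Real.pi * y / (2 * b)) * Real.cosh (Real.pi * x / (2 * b))) /
          (Real.cos (Real.pi * y / b) + Real.cosh (Real.pi * x / b)) : ℝ) : ℂ) ∧
    0 < (1 / b) * (Real.cos (Real.pi * y / (2 * b)) * Real.cosh (Real.pi * x / (2 * b))) /
          (Real.cos (Real.pi * y / b) + Real.cosh (Real.pi * x / b)) := by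
  refine ⟨?_, fourier_cosh_ratio_pos hy x⟩
  push_cast
  exact fourier_cosh_ratio_general b x y (by simpa using hy)
end

section
/- Fix b > 0 and define K_b(z) := (1/(2π)) ∫_{−1}^{1} (j_F(α)/cosh(bα)) e^{izα} dα for z ∈ ℂ, where j_F(α) := max{1 − |α|, 0} is the Fejér kernel. Then for all real x and y with |y| < b, one has Re K_b(x + iy) > 0. -/
open Filter Topology MeasureTheory Set

/-- The Fejér kernel `j_F(α) = max{1 - |α|, 0}`. -/
noncomputable def jF (α : ℝ) : ℝ := max (1 - |α|) 0

/-- The Tsang kernel `K_b(z) = (1/(2π)) ∫_{-1}^{1} (j_F(α)/cosh(bα)) e^{izα} dα`. -/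
noncomputable def Kb (b : ℝ) (z : ℂ) : ℂ :=
  (1 / (2 * Real.pi)) * ∫ α in (-1 : ℝ)..1,
    ((jF α / Real.cosh (b * α) : ℝ) : ℂ) * Complex.exp (Complex.I * z * α)

/-! Since `e^{|yα|} ≤ 2 cosh (bα)` for `|y| ≤ b`, the kernel is bounded and continuous on the closed
strip `|Im z| ≤ b` and holomorphic inside. Folding the defining integral by `α ↦ -α` turns
`e^{-yα}` into `cosh (yα)`, which cancels the weight `1 / cosh (bα)` on the lines `Im z = ±b`: there
`Re K_b` is the cosine transform of the Fejér kernel, `sinc (x / 2) ^ 2` up to a positive factor.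
The Phragmén–Lindelöf and maximum modulus principles for `exp (-K_b)` carry this positivity into
the strip. -/

lemma norm_cexp_neg_le_one_iff {w : ℂ} : ‖Complex.exp (-w)‖ ≤ 1 ↔ 0 ≤ w.re := by
  rw [Complex.norm_exp, Complex.neg_re, Real.exp_le_one_iff, neg_nonpos]

lemma re_nonneg_of_re_nonneg_on_strip_boundary {F : ℂ → ℂ} {a b C : ℝ} {z : ℂ}
    (hF : DiffContOnCl ℂ F (Complex.im ⁻¹' Ioo a b))
    (hC : ∀ w : ℂ, w.im ∈ Ioo a b → C ≤ (F w).re)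
    (ha : ∀ w : ℂ, w.im = a → 0 ≤ (F w).re) (hb : ∀ w : ℂ, w.im = b → 0 ≤ (F w).re)
    (hz : z.im ∈ Ioo a b) : 0 ≤ (F z).re := by
  have hab : 0 < b - a := sub_pos.2 (hz.1.trans hz.2)
  have hexp_bound : ∀ w : ℂ, w.im ∈ Ioo a b → ‖Complex.exp (-F w)‖ ≤ Real.exp (-C) := fun w hw => by
    rw [Complex.norm_exp, Complex.neg_re]
    exact Real.exp_le_exp.2 (neg_le_neg (hC w hw))
  refine norm_cexp_neg_le_one_iff.1 (PhragmenLindelof.horizontal_strip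
    (f := fun w => Complex.exp (-F w)) (Complex.differentiable_exp.comp_diffContOnCl hF.neg)
    ⟨0, div_pos Real.pi_pos hab, -C, ?_⟩ (fun w hw => norm_cexp_neg_le_one_iff.2 (ha w hw))
    (fun w hw => norm_cexp_neg_le_one_iff.2 (hb w hw)) hz.1.le hz.2.le)
  refine .of_bound 1 ((eventually_principal.2 fun w hw => ?_).filter_mono inf_le_right)
  simpa using hexp_bound w hw

lemma re_pos_of_re_nonneg_of_isPreconnected {E : Type*} [NormedAddCommGroup E] [NormedSpace ℂ E]
    {F : E → ℂ} {U : Set E} {c z₀ : E} (hU : IsPreconnected U) (hUo : IsOpen U)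
    (hF : DiffContOnCl ℂ F U) (hnonneg : ∀ z ∈ U, 0 ≤ (F z).re)
    (hz₀ : z₀ ∈ closure U) (hpos : 0 < (F z₀).re) (hc : c ∈ U) : 0 < (F c).re := by
  refine (hnonneg c hc).lt_of_ne fun hre => ?_
  have hnorm : ‖Complex.exp (-F c)‖ = 1 := by simp [Complex.norm_exp, ← hre]
  have hmax : IsMaxOn (norm ∘ fun z => Complex.exp (-F z)) U c := fun z hz => by
    simpa only [mem_ofPred_eq, Function.comp_apply, hnorm] using
      norm_cexp_neg_le_one_iff.2 (hnonneg z hz)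
  have hconst : Complex.exp (-F z₀) = Complex.exp (-F c) :=
    Complex.eqOn_closure_of_isPreconnected_of_isMaxOn_norm hU hUo
      (Complex.differentiable_exp.comp_diffContOnCl hF.neg) hc hmax hz₀
  have hre₀ : (F z₀).re = 0 := by
    simpa [Complex.norm_exp, hnorm] using congrArg norm hconst
  exact hpos.ne' hre₀

lemma re_pos_of_re_nonneg_on_strip_boundary {F : ℂ → ℂ} {a b C : ℝ} {z z₀ : ℂ}
    (hF : DiffContOnCl ℂ F (Complex.im ⁻¹' Ioo a b))
    (hC : ∀ w : ℂ, w.im ∈ Ioo a b → C ≤ (F w).re)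
    (ha : ∀ w : ℂ, w.im = a → 0 ≤ (F w).re) (hb : ∀ w : ℂ, w.im = b → 0 ≤ (F w).re)
    (hz₀ : z₀.im ∈ Icc a b) (hpos : 0 < (F z₀).re) (hz : z.im ∈ Ioo a b) : 0 < (F z).re := by
  refine re_pos_of_re_nonneg_of_isPreconnected
    ((convex_Ioo a b).linear_preimage Complex.imLm).isPreconnected
    (isOpen_Ioo.preimage Complex.continuous_im) hF
    (fun w hw => re_nonneg_of_re_nonneg_on_strip_boundary hF hC ha hb hw) ?_ hpos hz
  change z₀ ∈ closure (Complex.im ⁻¹' Ioo a b)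
  rwa [Complex.closure_preimage_im, closure_Ioo (hz.1.trans hz.2).ne]

lemma norm_cexp_I_mul_mul_le {c : ℝ} {z : ℂ} (hz : |z.im| ≤ c) (α : ℝ) :
    ‖Complex.exp (Complex.I * z * α)‖ ≤ Real.exp (c * |α|) := by
  rw [Complex.norm_exp]
  refine Real.exp_le_exp.2 ?_
  calc (Complex.I * z * α).re = -(z.im * α) := by simp
    _ ≤ |z.im| * |α| := (neg_le_abs _).trans_eq (abs_mul _ _)
    _ ≤ c * |α| := by gcongr

lemma exp_mul_abs_le_two_mul_cosh (b α : ℝ) : Real.exp (b * |α|) ≤ 2 * Real.cosh (b * α) := by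
  calc Real.exp (b * |α|) ≤ Real.exp |b * α| := by
        rw [abs_mul]
        gcongr
        exact le_abs_self b
    _ ≤ Real.exp (b * α) + Real.exp (-(b * α)) := Real.exp_abs_le _
    _ = 2 * Real.cosh (b * α) := by rw [Real.cosh_eq]; ring

lemma abs_mul_exp_le_two_div_sub_mul_cosh {b c : ℝ} (hcb : c < b) (α : ℝ) :
    |α| * Real.exp (c * |α|) ≤ 2 / (b - c) * Real.cosh (b * α) := by
  have hbc : 0 < b - c := sub_pos.2 hcb
  have hlin : (b - c) * |α| ≤ Real.exp ((b - c) * |α|) := by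
    linarith [Real.add_one_le_exp ((b - c) * |α|)]
  rw [div_mul_eq_mul_div, le_div_iff₀' hbc]
  calc (b - c) * (|α| * Real.exp (c * |α|))
      ≤ Real.exp ((b - c) * |α|) * Real.exp (c * |α|) := by rw [← mul_assoc]; gcongr
    _ = Real.exp (b * |α|) := by rw [← Real.exp_add]; ring_nf
    _ ≤ 2 * Real.cosh (b * α) := exp_mul_abs_le_two_mul_cosh b α

/-- The integrand `(j(α) / cosh(bα)) e^{izα}` of `tsangKernel j b z`. -/
noncomputable def tsangIntegrand (j : ℝ → ℝ) (b : ℝ) (z : ℂ) (α : ℝ) : ℂ :=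
  ((j α / Real.cosh (b * α) : ℝ) : ℂ) * Complex.exp (Complex.I * z * α)

/-- The Tsang kernel `(1/(2π)) ∫ (j(α) / cosh(bα)) e^{izα} dα` of an arbitrary weight `j` on the
line in place of the Fejér kernel. -/
noncomputable def tsangKernel (j : ℝ → ℝ) (b : ℝ) (z : ℂ) : ℂ :=
  (1 / (2 * Real.pi)) * ∫ α, tsangIntegrand j b z α

section TsangKernel

variable {j : ℝ → ℝ} {b : ℝ} {z : ℂ}

lemma norm_tsangIntegrand (j : ℝ → ℝ) (b : ℝ) (z : ℂ) (α : ℝ) :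
    ‖tsangIntegrand j b z α‖ =
      |j α| / Real.cosh (b * α) * ‖Complex.exp (Complex.I * z * α)‖ := by
  rw [tsangIntegrand, norm_mul, Complex.norm_real, Real.norm_eq_abs, abs_div,
    abs_of_pos (Real.cosh_pos _)]

lemma norm_tsangIntegrand_le (hz : |z.im| ≤ b) (α : ℝ) :
    ‖tsangIntegrand j b z α‖ ≤ 2 * |j α| := by
  rw [norm_tsangIntegrand]
  calc |j α| / Real.cosh (b * α) * ‖Complex.exp (Complex.I * z * α)‖
      ≤ |j α| / Real.cosh (b * α) * (2 * Real.cosh (b * α)) := by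
        gcongr
        exact (norm_cexp_I_mul_mul_le hz α).trans (exp_mul_abs_le_two_mul_cosh b α)
    _ = 2 * |j α| := by field_simp

lemma norm_tsangIntegrand_mul_I_mul_le {c : ℝ} (hz : |z.im| ≤ c) (hcb : c < b) (α : ℝ) :
    ‖tsangIntegrand j b z α * (Complex.I * α)‖ ≤ 2 / (b - c) * |j α| := by
  rw [norm_mul, norm_tsangIntegrand, norm_mul, Complex.norm_I, one_mul, Complex.norm_real,
    Real.norm_eq_abs]
  calc |j α| / Real.cosh (b * α) * ‖Complex.exp (Complex.I * z * α)‖ * |α|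
      ≤ |j α| / Real.cosh (b * α) * Real.exp (c * |α|) * |α| := by
        gcongr
        exact norm_cexp_I_mul_mul_le hz α
    _ = |j α| / Real.cosh (b * α) * (|α| * Real.exp (c * |α|)) := by ring
    _ ≤ |j α| / Real.cosh (b * α) * (2 / (b - c) * Real.cosh (b * α)) := by
        gcongr ?_ * ?_
        exact abs_mul_exp_le_two_div_sub_mul_cosh hcb α
    _ = 2 / (b - c) * |j α| := by field_simp

lemma hasDerivAt_tsangIntegrand (j : ℝ → ℝ) (b : ℝ) (z : ℂ) (α : ℝ) :
    HasDerivAt (fun w => tsangIntegrand j b w α) (tsangIntegrand j b z α * (Complex.I * α)) z := by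
  have hlin : HasDerivAt (fun w : ℂ => Complex.I * w * α) (Complex.I * α) z := by
    simpa using ((hasDerivAt_id z).const_mul Complex.I).mul_const (α : ℂ)
  simpa only [tsangIntegrand, mul_assoc] using hlin.cexp.const_mul _

lemma aestronglyMeasurable_tsangIntegrand (hj : Integrable j) (b : ℝ) (z : ℂ) :
    AEStronglyMeasurable (tsangIntegrand j b z) := by
  have hcosh : Continuous fun α : ℝ => (Real.cosh (b * α))⁻¹ :=
    Continuous.inv₀ (by fun_prop) fun α => (Real.cosh_pos _).ne'
  have hexp : Continuous fun α : ℝ => Complex.exp (Complex.I * z * α) := by fun_prop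
  exact (Complex.continuous_ofReal.comp_aestronglyMeasurable
    (hj.aestronglyMeasurable.mul hcosh.aestronglyMeasurable)).mul hexp.aestronglyMeasurable

lemma integrable_tsangIntegrand (hj : Integrable j) (hz : |z.im| ≤ b) :
    Integrable (tsangIntegrand j b z) :=
  (hj.abs.const_mul 2).mono' (aestronglyMeasurable_tsangIntegrand hj b z)
    (.of_forall (norm_tsangIntegrand_le hz))

lemma norm_tsangKernel_le (hj : Integrable j) (hz : |z.im| ≤ b) :
    ‖tsangKernel j b z‖ ≤ ‖(1 / (2 * Real.pi) : ℂ)‖ * ∫ α, 2 * |j α| := by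
  rw [tsangKernel, norm_mul]
  gcongr
  exact norm_integral_le_of_norm_le (hj.abs.const_mul 2) (.of_forall (norm_tsangIntegrand_le hz))

lemma continuousOn_tsangKernel (hj : Integrable j) :
    ContinuousOn (tsangKernel j b) (Complex.im ⁻¹' Icc (-b) b) :=
  continuousOn_const.mul <| continuousOn_of_dominated
    (fun w _ => aestronglyMeasurable_tsangIntegrand hj b w)
    (fun _ hw => .of_forall (norm_tsangIntegrand_le (abs_le.2 hw))) (hj.abs.const_mul 2)
    (.of_forall fun α w _ => (hasDerivAt_tsangIntegrand j b w α).continuousAt.continuousWithinAt)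

lemma differentiableAt_tsangKernel (hj : Integrable j) (hz : |z.im| < b) :
    DifferentiableAt ℂ (tsangKernel j b) z := by
  obtain ⟨c, hzc, hcb⟩ := exists_between hz
  have hnhds : {w : ℂ | |w.im| < c} ∈ 𝓝 z :=
    (isOpen_lt (by fun_prop) continuous_const).mem_nhds hzc
  have hmul_I : Continuous fun α : ℝ => Complex.I * (α : ℂ) := by fun_prop
  have hderiv := hasDerivAt_integral_of_dominated_loc_of_deriv_le
    (F := tsangIntegrand j b) (F' := fun w α => tsangIntegrand j b w α * (Complex.I * α)) hnhds
    (.of_forall (aestronglyMeasurable_tsangIntegrand hj b)) (integrable_tsangIntegrand hj hz.le)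
    ((aestronglyMeasurable_tsangIntegrand hj b z).mul hmul_I.aestronglyMeasurable)
    (.of_forall fun α w hw => norm_tsangIntegrand_mul_I_mul_le (le_of_lt hw) hcb α)
    (hj.abs.const_mul _)
    (.of_forall fun α w _ => hasDerivAt_tsangIntegrand j b w α)
  exact hderiv.2.differentiableAt.const_mul _

lemma diffContOnCl_tsangKernel (hj : Integrable j) :
    DiffContOnCl ℂ (tsangKernel j b) (Complex.im ⁻¹' Ioo (-b) b) where
  differentiableOn _ hw :=
    (differentiableAt_tsangKernel hj (abs_lt.2 hw)).differentiableWithinAt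
  continuousOn := (continuousOn_tsangKernel hj).mono <| by
    rw [Complex.closure_preimage_im]
    exact preimage_mono (closure_minimal Ioo_subset_Icc_self isClosed_Icc)

lemma re_tsangIntegrand (j : ℝ → ℝ) (b : ℝ) (z : ℂ) (α : ℝ) :
    (tsangIntegrand j b z α).re =
      j α / Real.cosh (b * α) * (Real.exp (-(z.im * α)) * Real.cos (z.re * α)) := by
  rw [tsangIntegrand, Complex.re_ofReal_mul, Complex.exp_re]
  simp

lemma re_tsangIntegrand_add_re_tsangIntegrand_neg (hj : j.Even) (b : ℝ) (z : ℂ) (α : ℝ) :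
    (tsangIntegrand j b z α).re + (tsangIntegrand j b z (-α)).re =
      2 * (j α * (Real.cosh (z.im * α) / Real.cosh (b * α)) * Real.cos (z.re * α)) := by
  simp only [re_tsangIntegrand, hj α, mul_neg, neg_neg, Real.cosh_neg, Real.cos_neg,
    Real.cosh_eq (z.im * α)]
  ring

lemma re_tsangKernel (hj : Integrable j) (hj_even : j.Even) (hz : |z.im| ≤ b) :
    (tsangKernel j b z).re = 1 / (2 * Real.pi) *
      ∫ α, j α * (Real.cosh (z.im * α) / Real.cosh (b * α)) * Real.cos (z.re * α) := by
  have hint : Integrable fun α => (tsangIntegrand j b z α).re :=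
    (integrable_tsangIntegrand hj hz).re
  have hfold : 2 * ∫ α, (tsangIntegrand j b z α).re =
      2 * ∫ α, j α * (Real.cosh (z.im * α) / Real.cosh (b * α)) * Real.cos (z.re * α) := by
    calc 2 * ∫ α, (tsangIntegrand j b z α).re
        = (∫ α, (tsangIntegrand j b z α).re) + ∫ α, (tsangIntegrand j b z (-α)).re := by
          rw [integral_neg_eq_self (fun α => (tsangIntegrand j b z α).re), two_mul]
      _ = ∫ α, ((tsangIntegrand j b z α).re + (tsangIntegrand j b z (-α)).re) :=
          (integral_add hint hint.comp_neg).symm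
      _ = _ := by
          simp only [re_tsangIntegrand_add_re_tsangIntegrand_neg hj_even, integral_const_mul]
  have hre : ∫ α, (tsangIntegrand j b z α).re = (∫ α, tsangIntegrand j b z α).re :=
    integral_re (integrable_tsangIntegrand hj hz)
  have hscalar : (1 / (2 * Real.pi) : ℂ) = ((1 / (2 * Real.pi) : ℝ) : ℂ) := by push_cast; rfl
  rw [tsangKernel, hscalar, Complex.re_ofReal_mul, ← hre, mul_left_cancel₀ two_ne_zero hfold]

lemma re_tsangKernel_of_abs_im_eq (hj : Integrable j) (hj_even : j.Even) (hz : |z.im| = b) :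
    (tsangKernel j b z).re = 1 / (2 * Real.pi) * ∫ α, j α * Real.cos (z.re * α) := by
  have hcosh (α : ℝ) : Real.cosh (z.im * α) / Real.cosh (b * α) = 1 := by
    rw [← Real.cosh_abs (z.im * α), ← Real.cosh_abs (b * α), abs_mul, abs_mul, ← hz, abs_abs,
      div_self (Real.cosh_pos _).ne']
  simp only [re_tsangKernel hj hj_even hz.le, hcosh, mul_one]

theorem Kb_re_pos_general (hj : Integrable j) (hj_even : j.Even)
    (hcos : ∀ x, 0 ≤ ∫ α, j α * Real.cos (x * α)) (hpos : ∃ x, 0 < ∫ α, j α * Real.cos (x * α))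
    (hz : |z.im| < b) : 0 < (tsangKernel j b z).re := by
  obtain ⟨x₀, hx₀⟩ := hpos
  have hb : 0 < b := (abs_nonneg _).trans_lt hz
  have hboundary (w : ℂ) (hw : |w.im| = b) : 0 ≤ (tsangKernel j b w).re := by
    rw [re_tsangKernel_of_abs_im_eq hj hj_even hw]
    exact mul_nonneg (by positivity) (hcos w.re)
  have hboundary_pos : 0 < (tsangKernel j b ⟨x₀, b⟩).re := by
    rw [re_tsangKernel_of_abs_im_eq (z := ⟨x₀, b⟩) hj hj_even (abs_of_pos hb)]
    exact mul_pos (by positivity) hx₀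
  refine re_pos_of_re_nonneg_on_strip_boundary (diffContOnCl_tsangKernel hj)
    (fun w hw => neg_le_of_abs_le <| (Complex.abs_re_le_norm _).trans
      (norm_tsangKernel_le hj (abs_lt.2 hw).le))
    (fun w hw => hboundary w ?_) (fun w hw => hboundary w ?_)
    (right_mem_Icc.2 (neg_le_self hb.le)) hboundary_pos (abs_lt.1 hz)
  · rw [hw, abs_neg, abs_of_pos hb]
  · rw [hw, abs_of_pos hb]

end TsangKernel

lemma continuous_jF : Continuous jF := by unfold jF; fun_prop

lemma even_jF : jF.Even := fun α => by simp only [jF, abs_neg]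

lemma support_jF_subset : Function.support jF ⊆ Ioc (-1) 1 := fun α hα => by
  have hα_lt : |α| < 1 := by
    contrapose! hα
    simpa [jF] using hα
  exact ⟨(abs_lt.1 hα_lt).1, (abs_lt.1 hα_lt).2.le⟩

lemma integrable_jF : Integrable jF :=
  (integrableOn_iff_integrable_of_support_subset
    (support_jF_subset.trans Ioc_subset_Icc_self)).1 continuous_jF.integrableOn_Icc

lemma Kb_eq_tsangKernel (b : ℝ) (z : ℂ) : Kb b z = tsangKernel jF b z := by
  have hsupport : Function.support (tsangIntegrand jF b z) ⊆ Ioc (-1) 1 := fun α hα =>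
    support_jF_subset fun h => hα (by simp [tsangIntegrand, h])
  rw [tsangKernel, ← intervalIntegral.integral_eq_integral_of_support_subset hsupport]
  rfl

lemma integral_one_sub_mul_cos (x : ℝ) :
    ∫ t in (0 : ℝ)..1, (1 - t) * Real.cos (x * t) = Real.sinc (x / 2) ^ 2 / 2 := by
  rcases eq_or_ne x 0 with rfl | hx
  · simp only [zero_mul, Real.cos_zero, mul_one, zero_div, Real.sinc_zero, one_pow]
    rw [intervalIntegral.integral_sub (by simp) (by simp), integral_one, integral_id]
    norm_num
  have hprimitive (t : ℝ) : HasDerivAt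
      (fun t => (1 - t) * Real.sin (x * t) / x - Real.cos (x * t) / x ^ 2)
      ((1 - t) * Real.cos (x * t)) t := by
    have hlin : HasDerivAt (fun t : ℝ => x * t) x t := by simpa using (hasDerivAt_id t).const_mul x
    refine (((((hasDerivAt_id t).const_sub 1).mul hlin.sin).div_const x).sub
      (hlin.cos.div_const (x ^ 2))).congr_deriv ?_
    simp only [id_eq]
    field_simp
    ring
  have hcos : Real.cos x = 1 - 2 * Real.sin (x / 2) ^ 2 := by
    rw [← mul_div_cancel₀ x (two_ne_zero' ℝ), Real.cos_two_mul, Real.cos_sq']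
    ring_nf
  rw [intervalIntegral.integral_eq_sub_of_hasDerivAt (fun t _ => hprimitive t)
    (Continuous.intervalIntegrable (by fun_prop) _ _),
    Real.sinc_of_ne_zero (div_ne_zero hx two_ne_zero)]
  simp only [hcos, sub_self, sub_zero, zero_sub, sub_neg_eq_add, mul_one, mul_zero, zero_mul,
    zero_div, Real.sin_zero, Real.cos_zero]
  field_simp
  ring

lemma integral_jF_mul_cos (x : ℝ) : ∫ α, jF α * Real.cos (x * α) = Real.sinc (x / 2) ^ 2 := by
  have habs (α : ℝ) : jF |α| * Real.cos (x * |α|) = jF α * Real.cos (x * α) := by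
    rcases abs_choice α with h | h <;> simp [h, even_jF α]
  have hvanish : ∀ t ∈ Ioi (0 : ℝ) \ Ioc 0 1, jF t * Real.cos (x * t) = 0 := fun t ht => by
    rw [Function.notMem_support.1 fun h => ht.2 ⟨ht.1, (support_jF_subset h).2⟩, zero_mul]
  have hjF : ∀ t ∈ Ioc (0 : ℝ) 1, jF t * Real.cos (x * t) = (1 - t) * Real.cos (x * t) :=
    fun t ht => by rw [jF, abs_of_pos ht.1, max_eq_left (sub_nonneg.2 ht.2)]
  calc ∫ α, jF α * Real.cos (x * α)
      = 2 * ∫ t in Ioi (0 : ℝ), jF t * Real.cos (x * t) := by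
        simp only [← integral_comp_abs (f := fun t => jF t * Real.cos (x * t)), habs]
    _ = 2 * ∫ t in Ioc (0 : ℝ) 1, jF t * Real.cos (x * t) := by
        rw [setIntegral_eq_of_subset_of_forall_sdiff_eq_zero measurableSet_Ioi
          Ioc_subset_Ioi_self hvanish]
    _ = 2 * ∫ t in (0 : ℝ)..1, (1 - t) * Real.cos (x * t) := by
        rw [setIntegral_congr_fun measurableSet_Ioc hjF,
          intervalIntegral.integral_of_le zero_le_one]
    _ = Real.sinc (x / 2) ^ 2 := by
        rw [integral_one_sub_mul_cos, mul_div_cancel₀ _ two_ne_zero]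

/-- For `b > 0` and `|y| < b`, the Tsang kernel satisfies `Re K_b(x + iy) > 0`. -/
theorem Kb_re_pos (b : ℝ) (hb : 0 < b) (x y : ℝ) (hy : |y| < b) :
    0 < (Kb b (x + y * Complex.I)).re := by
  rw [Kb_eq_tsangKernel]
  exact Kb_re_pos_general integrable_jF even_jF
    (fun t => by rw [integral_jF_mul_cos]; positivity) ⟨0, by rw [integral_jF_mul_cos]; simp⟩
    (by simpa using hy)
end
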